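/- arXiv:1404.3327 — 3 statements merged into one kernel-verified Lean document; each statement's English description precedes it below -/
import Mathlib

section
/- Let ι be a nonempty finite index type, A : Matrix ι ι ℝ an entrywise nonnegative matrix, and w : ι → ℝ with w i > 0 for all i. Then ‖A.mulVec w‖_w is the greatest element of the set { ‖A.mulVec x‖_w | x : ι → ℝ, ‖x‖_w ≤ 1 }; equivalently, ‖A.mulVec x‖_w ≤ ‖A.mulVec w‖_w · ‖x‖_w for all x, with equality attained at x = w (note ‖w‖_w = 1). That is, the operator norm of A induced by the w-norm equals ‖A.mulVec w‖_w. -/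
open Finset

/-- The `w`-norm of a vector `x`: the maximum over `i` of `|x i| / w i`. -/
noncomputable def wNorm {ι : Type*} [Fintype ι] [Nonempty ι] (w x : ι → ℝ) : ℝ :=
  Finset.univ.sup' Finset.univ_nonempty (fun i => |x i| / w i)

section MulVec

variable {m n R : Type*} [Fintype n] [Ring R] [LinearOrder R] [IsOrderedRing R]

theorem abs_mulVec_le_mulVec_of_abs_le {A : Matrix m n R} (hA : ∀ i j, 0 ≤ A i j)
    {x y : n → R} (hxy : ∀ j, |x j| ≤ y j) (i : m) :
    |A.mulVec x i| ≤ A.mulVec y i :=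
  calc |∑ j, A i j * x j| ≤ ∑ j, |A i j * x j| := abs_sum_le_sum_abs _ _
    _ = ∑ j, A i j * |x j| := by simp only [abs_mul, abs_of_nonneg (hA i _)]
    _ ≤ ∑ j, A i j * y j :=
      sum_le_sum fun j _ => mul_le_mul_of_nonneg_left (hxy j) (hA i j)

end MulVec

section WNorm

variable {ι : Type*} [Fintype ι] [Nonempty ι] {w : ι → ℝ}

theorem wNorm_nonneg (hw : ∀ i, 0 ≤ w i) (x : ι → ℝ) : 0 ≤ wNorm w x :=
  let ⟨i⟩ := ‹Nonempty ι›
  (div_nonneg (abs_nonneg (x i)) (hw i)).trans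
    (le_sup' (fun i => |x i| / w i) (mem_univ i))

theorem wNorm_le_iff (hw : ∀ i, 0 < w i) {x : ι → ℝ} {c : ℝ} :
    wNorm w x ≤ c ↔ ∀ i, |x i| ≤ c * w i := by
  simp [wNorm, div_le_iff₀ (hw _)]

theorem abs_apply_le_wNorm_mul (hw : ∀ i, 0 < w i) (x : ι → ℝ) (i : ι) :
    |x i| ≤ wNorm w x * w i :=
  (wNorm_le_iff hw).1 le_rfl i

theorem wNorm_self (hw : ∀ i, 0 < w i) : wNorm w w = 1 := by
  simp [wNorm, abs_of_pos (hw _), (hw _).ne']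

end WNorm

section OperatorNorm

variable {m n : Type*} [Fintype m] [Nonempty m] [Fintype n] [Nonempty n]
  {A : Matrix m n ℝ} {v : m → ℝ} {w : n → ℝ}

theorem wNorm_mulVec_le (hA : ∀ i j, 0 ≤ A i j) (hv : ∀ i, 0 < v i) (hw : ∀ j, 0 < w j)
    (x : n → ℝ) : wNorm v (A.mulVec x) ≤ wNorm v (A.mulVec w) * wNorm w x := by
  refine (wNorm_le_iff hv).2 fun i => ?_
  have hx : 0 ≤ wNorm w x := wNorm_nonneg (fun j => (hw j).le) x
  have hAw : A.mulVec w i ≤ wNorm v (A.mulVec w) * v i :=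
    (le_abs_self _).trans (abs_apply_le_wNorm_mul hv _ i)
  calc |A.mulVec x i| ≤ A.mulVec (wNorm w x • w) i :=
        abs_mulVec_le_mulVec_of_abs_le hA (abs_apply_le_wNorm_mul hw x) i
    _ = wNorm w x * A.mulVec w i := by rw [Matrix.mulVec_smul, Pi.smul_apply, smul_eq_mul]
    _ ≤ wNorm w x * (wNorm v (A.mulVec w) * v i) := mul_le_mul_of_nonneg_left hAw hx
    _ = wNorm v (A.mulVec w) * wNorm w x * v i := by ring

theorem wNorm_opNorm_eq_wNorm_mulVec_general
    (hA : ∀ i j, 0 ≤ A i j) (hv : ∀ i, 0 < v i) (hw : ∀ j, 0 < w j) :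
    IsGreatest {y : ℝ | ∃ x : n → ℝ, wNorm w x ≤ 1 ∧ y = wNorm v (A.mulVec x)}
      (wNorm v (A.mulVec w)) ∧
    (∀ x : n → ℝ, wNorm v (A.mulVec x) ≤ wNorm v (A.mulVec w) * wNorm w x) ∧
    wNorm w w = 1 := by
  refine ⟨⟨⟨w, (wNorm_self hw).le, rfl⟩, ?_⟩, wNorm_mulVec_le hA hv hw, wNorm_self hw⟩
  rintro _ ⟨x, hx, rfl⟩
  have hAw : 0 ≤ wNorm v (A.mulVec w) := wNorm_nonneg (fun i => (hv i).le) _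
  exact (wNorm_mulVec_le hA hv hw x).trans (mul_le_of_le_one_right hAw hx)

end OperatorNorm

/-- The operator norm of `A` induced by the `w`-norm equals `‖A.mulVec w‖_w`. -/
theorem wNorm_opNorm_eq_wNorm_mulVec
    {ι : Type*} [Fintype ι] [Nonempty ι]
    (A : Matrix ι ι ℝ) (w : ι → ℝ)
    (hA : ∀ i j, 0 ≤ A i j)
    (hw : ∀ i, 0 < w i) :
    IsGreatest {y : ℝ | ∃ x : ι → ℝ, wNorm w x ≤ 1 ∧ y = wNorm w (A.mulVec x)}
      (wNorm w (A.mulVec w)) ∧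
    (∀ x : ι → ℝ, wNorm w (A.mulVec x) ≤ wNorm w (A.mulVec w) * wNorm w x) ∧
    wNorm w w = 1 :=
  wNorm_opNorm_eq_wNorm_mulVec_general hA hw hw
end

section
/- Let ι be a nonempty finite index type, A : Matrix ι ι ℝ an entrywise nonnegative matrix, σ s : ℝ with s > σ, and w : ι → ℝ a σ-suitable vector for A. Then the matrix s • 1 - A (where 1 is the identity matrix) is invertible, i.e., IsUnit (s • (1 : Matrix ι ι ℝ) - A). -/
/-!
`s • 1 - A` has nonpositive off-diagonal entries and sends `w` to a positive vector. Such a matrix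
`M` is monotone: if `0 ≤ M *ᵥ v` and the least ratio `c` of `v` to `w` were negative, then
`x = v - c • w` would be nonnegative and vanish at some `i`, so that `(M *ᵥ x) i ≤ 0` by the signs
of the entries, whereas `M *ᵥ x = M *ᵥ v - c • M *ᵥ w` is positive. Monotonicity applied to `v`
and `-v` shows that the kernel is trivial.
-/

open Matrix

section ZMatrix

variable {ι : Type*} [Fintype ι]

theorem mulVec_apply_nonpos_of_offDiag_nonpos {R : Type*} [Semiring R] [PartialOrder R]
    [IsOrderedRing R] {M : Matrix ι ι R} {x : ι → R} {i : ι}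
    (hM : ∀ j, i ≠ j → M i j ≤ 0) (hx : 0 ≤ x) (hxi : x i = 0) : (M *ᵥ x) i ≤ 0 := by
  refine Finset.sum_nonpos fun j _ ↦ ?_
  obtain rfl | hij := eq_or_ne i j
  · rw [hxi, mul_zero]
  · exact mul_nonpos_of_nonpos_of_nonneg (hM j hij) (hx j)

variable {K : Type*} [Field K] [LinearOrder K] [IsStrictOrderedRing K]
  {M : Matrix ι ι K} {w : ι → K}

theorem nonneg_of_offDiag_nonpos_of_mulVec_nonneg {v : ι → K}
    (hM : Pairwise fun i j ↦ M i j ≤ 0) (hw : 0 ≤ w) (hMw : ∀ i, 0 < (M *ᵥ w) i)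
    (hMv : 0 ≤ M *ᵥ v) : 0 ≤ v := by
  have w_pos (i : ι) : 0 < w i := (hw i).lt_of_ne' fun hwi ↦
    (hMw i).not_ge (mulVec_apply_nonpos_of_offDiag_nonpos (fun _ hij ↦ hM hij) hw hwi)
  intro k
  have : Nonempty ι := ⟨k⟩
  obtain ⟨i, hi⟩ := Finite.exists_min fun j ↦ v j / w j
  set c := v i / w i with hc
  suffices c_nonneg : 0 ≤ c from
    (mul_nonneg c_nonneg (hw k)).trans ((le_div_iff₀ (w_pos k)).mp (hi k))
  by_contra! c_neg
  have x_nonneg : 0 ≤ v - c • w := fun j ↦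
    sub_nonneg_of_le ((le_div_iff₀ (w_pos j)).mp (hi j))
  have x_apply_eq_zero : (v - c • w) i = 0 := by
    simp [hc, (w_pos i).ne']
  have mulVec_nonpos : (M *ᵥ (v - c • w)) i ≤ 0 :=
    mulVec_apply_nonpos_of_offDiag_nonpos (fun _ hij ↦ hM hij) x_nonneg x_apply_eq_zero
  have mulVec_pos : 0 < (M *ᵥ (v - c • w)) i := by
    rw [mulVec_sub, mulVec_smul, Pi.sub_apply, Pi.smul_apply, smul_eq_mul, sub_pos]
    exact (mul_neg_of_neg_of_pos c_neg (hMw i)).trans_le (hMv i)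
  exact mulVec_pos.not_ge mulVec_nonpos

theorem isUnit_of_offDiag_nonpos_of_mulVec_pos [DecidableEq ι]
    (hM : Pairwise fun i j ↦ M i j ≤ 0) (hw : 0 ≤ w) (hMw : ∀ i, 0 < (M *ᵥ w) i) :
    IsUnit M := by
  rw [← mulVec_injective_iff_isUnit]
  refine (injective_iff_map_eq_zero M.mulVecLin).mpr fun v hMv ↦ ?_
  rw [mulVecLin_apply] at hMv
  have v_nonneg : 0 ≤ v := nonneg_of_offDiag_nonpos_of_mulVec_nonneg hM hw hMw hMv.ge
  have neg_v_nonneg : 0 ≤ -v :=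
    nonneg_of_offDiag_nonpos_of_mulVec_nonneg hM hw hMw (by rw [mulVec_neg, hMv, neg_zero])
  exact le_antisymm (neg_nonneg.mp neg_v_nonneg) v_nonneg

theorem isUnit_smul_one_sub_of_suitable_general [DecidableEq ι] {A : Matrix ι ι K} {σ s : K}
    (hA : Pairwise fun i j ↦ 0 ≤ A i j) (hw : ∀ i, 0 < w i)
    (hsuit : ∀ i, (A *ᵥ w) i ≤ σ * w i) (hs : σ < s) :
    IsUnit (s • (1 : Matrix ι ι K) - A) := by
  refine isUnit_of_offDiag_nonpos_of_mulVec_pos (w := w) (fun i j hij ↦ ?_) (fun i ↦ (hw i).le)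
    fun i ↦ ?_
  · simpa [one_apply_ne hij] using hA hij
  · rw [sub_mulVec, smul_mulVec, one_mulVec, Pi.sub_apply, Pi.smul_apply, smul_eq_mul, sub_pos]
    exact (hsuit i).trans_lt (mul_lt_mul_of_pos_right hs (hw i))

end ZMatrix

theorem isUnit_smul_one_sub_of_suitable
    {ι : Type*} [Fintype ι] [Nonempty ι] [DecidableEq ι]
    (A : Matrix ι ι ℝ) (σ s : ℝ) (w : ι → ℝ)
    (hA : ∀ i j, 0 ≤ A i j)
    (hw : ∀ i, 0 < w i)
    (hsuit : ∀ i, A.mulVec w i ≤ σ * w i)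
    (hs : σ < s) :
    IsUnit (s • (1 : Matrix ι ι ℝ) - A) :=
  isUnit_smul_one_sub_of_suitable_general (fun i j _ ↦ hA i j) hw hsuit hs
end

section
/- Let ι be a nonempty finite index type, P : Matrix ι ι ℝ an entrywise nonnegative matrix whose rows sum to 1 (∀ i, Σ_j P i j = 1), and α : ℝ with 0 < α < 1. Then for all x b : ι → ℝ, if ((1 : Matrix ι ι ℝ) - α • Pᵀ).mulVec x = b, then Σ_i |x i| ≤ (Σ_i |b i|)/(1 - α). Equivalently, the ℓ₁ operator norm of (1 - α • Pᵀ)⁻¹ is at most 1/(1-α). -/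
open Finset Matrix

theorem sum_norm_mulVec_le {m n R : Type*} [Fintype m] [Fintype n] [NonUnitalSeminormedRing R]
    {A : Matrix m n R} {c : ℝ} (hA : ∀ j, ∑ i, ‖A i j‖ ≤ c) (x : n → R) :
    ∑ i, ‖(A *ᵥ x) i‖ ≤ c * ∑ j, ‖x j‖ :=
  calc
    ∑ i, ‖(A *ᵥ x) i‖ ≤ ∑ i, ∑ j, ‖A i j‖ * ‖x j‖ :=
      sum_le_sum fun _ _ => norm_sum_le_of_le _ fun _ _ => norm_mul_le _ _
    _ = ∑ j, (∑ i, ‖A i j‖) * ‖x j‖ := by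
      rw [sum_comm]
      simp only [sum_mul]
    _ ≤ ∑ j, c * ‖x j‖ := by
      gcongr with j
      exact hA j
    _ = c * ∑ j, ‖x j‖ := (mul_sum ..).symm

section Resolvent

variable {ι R : Type*} [Fintype ι] [DecidableEq ι] [SeminormedRing R]

theorem sum_norm_le_div_of_one_sub_mulVec_eq {A : Matrix ι ι R} {c : ℝ}
    (hA : ∀ j, ∑ i, ‖A i j‖ ≤ c) (hc : c < 1) {x b : ι → R} (hxb : (1 - A) *ᵥ x = b) :
    ∑ i, ‖x i‖ ≤ (∑ i, ‖b i‖) / (1 - c) := by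
  have fixed_point : x = b + A *ᵥ x := by
    rw [← hxb, sub_mulVec, one_mulVec, sub_add_cancel]
  have self_bound : ∑ i, ‖x i‖ ≤ ∑ i, ‖b i‖ + c * ∑ i, ‖x i‖ :=
    calc
      ∑ i, ‖x i‖ = ∑ i, ‖b i + (A *ᵥ x) i‖ :=
        sum_congr rfl fun i _ => congrArg norm (congrFun fixed_point i)
      _ ≤ ∑ i, ‖b i‖ + ∑ i, ‖(A *ᵥ x) i‖ := by
        rw [← sum_add_distrib]
        exact sum_le_sum fun _ _ => norm_add_le _ _
      _ ≤ ∑ i, ‖b i‖ + c * ∑ i, ‖x i‖ := by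
        gcongr
        exact sum_norm_mulVec_le hA x
  rw [le_div_iff₀ (sub_pos.mpr hc)]
  linarith

theorem pagerank_l1_resolvent_bound_general {P : Matrix ι ι R} {α : R}
    (hP : ∀ i, ∑ j, ‖P i j‖ ≤ 1) (hα : ‖α‖ < 1) {x b : ι → R}
    (hxb : (1 - α • Pᵀ) *ᵥ x = b) :
    ∑ i, ‖x i‖ ≤ (∑ i, ‖b i‖) / (1 - ‖α‖) := by
  refine sum_norm_le_div_of_one_sub_mulVec_eq (fun j => ?_) hα hxb
  calc
    ∑ i, ‖(α • Pᵀ) i j‖ ≤ ∑ i, ‖α‖ * ‖P j i‖ := sum_le_sum fun _ _ => norm_mul_le _ _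
    _ = ‖α‖ * ∑ i, ‖P j i‖ := (mul_sum ..).symm
    _ ≤ ‖α‖ := mul_le_of_le_one_right (norm_nonneg α) (hP j)

end Resolvent

theorem pagerank_l1_resolvent_bound
    {ι : Type*} [Fintype ι] [Nonempty ι] [DecidableEq ι]
    (P : Matrix ι ι ℝ) (α : ℝ)
    (hP : ∀ i j, 0 ≤ P i j)
    (hstoch : ∀ i, ∑ j, P i j = 1)
    (hα0 : 0 < α) (hα1 : α < 1) :
    ∀ x b : ι → ℝ, ((1 : Matrix ι ι ℝ) - α • Pᵀ).mulVec x = b →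
      ∑ i, |x i| ≤ (∑ i, |b i|) / (1 - α) := by
  intro x b hxb
  have row_sum : ∀ i, ∑ j, ‖P i j‖ ≤ 1 := fun i => by
    simp only [Real.norm_of_nonneg (hP i _), hstoch, le_refl]
  have norm_α : ‖α‖ = α := Real.norm_of_nonneg hα0.le
  simpa only [norm_α, Real.norm_eq_abs] using
    pagerank_l1_resolvent_bound_general row_sum (norm_α.trans_lt hα1) hxb
end
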